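/- Let $h : [0,\infty) \to [0,\infty)$ be measurable with $c := \int_0^\infty h(w^2) w^{n_1 + n_2 - 1}\, dw \in (0,\infty)$, and let $(X_1, X_2)$ be a random vector in $\mathbb{R}^{n_1+n_2} = \mathbb{R}^{n_1}\times\mathbb{R}^{n_2}$ with density proportional to $h(\|x_1\|^2 + \|x_2\|^2)$. Then the distribution of $F = \|X_1\|^2 / \|X_2\|^2$ has density $\frac{\Gamma((n_1+n_2)/2)}{\Gamma(n_1/2)\Gamma(n_2/2)} f^{n_1/2-1}(1+f)^{-(n_1+n_2)/2}$ on $(0,\infty)$, independent of the generator $h$. -/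

import Mathlib

open MeasureTheory Real

theorem aux_radial (n : ℕ) (hn : 0 < n) : ∃ K : ENNReal, ∀ f : ℝ → ENNReal, Measurable f →
    ∫⁻ x : EuclideanSpace ℝ (Fin n), f ‖x‖ =
      K * ∫⁻ y in Set.Ioi (0 : ℝ), ENNReal.ofReal (y ^ (n - 1)) * f y := by
  have : Nonempty (Fin n) := ⟨⟨0, hn⟩⟩
  set μ : Measure (EuclideanSpace ℝ (Fin n)) := volume with hμ
  refine ⟨μ.toSphere Set.univ, fun f hf => ?_⟩
  have hd : Module.finrank ℝ (EuclideanSpace ℝ (Fin n)) = n := by simp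
  calc
    ∫⁻ x, f (‖x‖) ∂μ = ∫⁻ x : ({(0)}ᶜ : Set (EuclideanSpace ℝ (Fin n))), f (‖x.1‖) ∂(μ.comap (↑)) := by
      rw [lintegral_subtype_comap (measurableSet_singleton _).compl fun x ↦ f (‖x‖),
        restrict_compl_singleton]
    _ = ∫⁻ x, f x.2 ∂μ.toSphere.prod (.volumeIoiPow (n - 1)) := by
      have := μ.measurePreserving_homeomorphUnitSphereProd.lintegral_comp_emb
        (Homeomorph.measurableEmbedding _) (fun x => f x.2)
      rw [hd] at this
      simpa using this
    _ = μ.toSphere Set.univ * ∫⁻ x : Set.Ioi (0 : ℝ), f x ∂.volumeIoiPow (n - 1) := by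
      rw [lintegral_prod _ (by fun_prop)]
      simp [mul_comm]
    _ = _ := by
      congr 1
      rw [Measure.volumeIoiPow, lintegral_withDensity_eq_lintegral_mul _ (by fun_prop) (by fun_prop)]
      exact lintegral_subtype_comap measurableSet_Ioi
        fun a : ℝ ↦ ENNReal.ofReal (a ^ (n - 1)) * f a

theorem aux_scale (a : ℝ) (ha : 0 < a) (f : ℝ → ENNReal) :
    ∫⁻ x in Set.Ioi (0 : ℝ), f x = ∫⁻ x in Set.Ioi (0 : ℝ), ENNReal.ofReal a * f (a * x) := by
  have himg : (fun x => a * x) '' Set.Ioi (0 : ℝ) = Set.Ioi 0 := by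
    ext y
    constructor
    · rintro ⟨x, hx, rfl⟩
      exact mul_pos ha hx
    · intro hy
      exact ⟨y / a, div_pos hy ha, by field_simp⟩
  have := lintegral_image_eq_lintegral_abs_deriv_mul (f := fun x => a * x) (f' := fun _ => a)
    (measurableSet_Ioi (a := (0 : ℝ)))
    (fun x _ => by simpa using ((hasDerivAt_id x).const_mul a).hasDerivWithinAt)
    (fun x _ y _ hxy => mul_left_cancel₀ ha.ne' hxy) f
  rw [himg, abs_of_pos ha] at this
  exact this

theorem aux_sq (f : ℝ → ENNReal) :
    ∫⁻ x in Set.Ioi (0 : ℝ), f x = ∫⁻ x in Set.Ioi (0 : ℝ), ENNReal.ofReal (2 * x) * f (x ^ 2) := by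
  have himg : (fun x : ℝ => x ^ 2) '' Set.Ioi (0 : ℝ) = Set.Ioi 0 := by
    ext y
    constructor
    · rintro ⟨x, hx, rfl⟩
      exact pow_pos (Set.mem_Ioi.1 hx) 2
    · intro hy
      exact ⟨√y, Real.sqrt_pos.2 hy, Real.sq_sqrt (le_of_lt hy)⟩
  have := lintegral_image_eq_lintegral_abs_deriv_mul (f := fun x : ℝ => x ^ 2)
    (f' := fun x => 2 * x)
    (measurableSet_Ioi (a := (0 : ℝ)))
    (fun x _ => by simpa using (hasDerivAt_pow 2 x).hasDerivWithinAt)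
    (fun x hx y hy hxy => by
      have hx : 0 < x := hx
      have hy : 0 < y := hy
      exact (pow_left_inj₀ hx.le hy.le two_ne_zero).1 hxy) f
  rw [himg] at this
  rw [this]
  refine setLIntegral_congr_fun measurableSet_Ioi fun x hx => ?_
  have hx : 0 < x := hx
  simp only [abs_of_pos (mul_pos two_pos hx)]

theorem aux_gamma (n : ℕ) (hn : 0 < n) :
    ∫⁻ w in Set.Ioi (0 : ℝ), ENNReal.ofReal (w ^ (n - 1)) * ENNReal.ofReal (exp (-w ^ 2)) =
      ENNReal.ofReal (1 / 2 * Gamma ((n : ℝ) / 2)) := by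
  have hn' : (0 : ℝ) < n := by exact_mod_cast hn
  have h1 := integral_rpow_mul_exp_neg_rpow (p := 2) (q := (n : ℝ) - 1) two_pos (by linarith)
  have h2 := integrableOn_rpow_mul_exp_neg_rpow (p := 2) (s := (n : ℝ) - 1) (by linarith) two_pos
  rw [sub_add_cancel] at h1
  rw [← h1, ofReal_integral_eq_lintegral_ofReal h2]
  · refine setLIntegral_congr_fun measurableSet_Ioi fun x hx => ?_
    have hx : 0 < x := hx
    rw [← ENNReal.ofReal_mul (by positivity), ← Real.rpow_natCast x (n - 1), Nat.cast_pred hn,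
      Real.rpow_two]
  · filter_upwards [ae_restrict_mem measurableSet_Ioi] with x hx
    have hx : 0 < x := hx
    simp only [Pi.zero_apply]
    positivity

theorem aux_core (n1 n2 : ℕ) (hn1 : 0 < n1) (hn2 : 0 < n2) (g H : ℝ → ENNReal)
    (hg : Measurable g) (hH : Measurable H) :
    2 * ∫⁻ s in Set.Ioi (0 : ℝ), ENNReal.ofReal (s ^ (n2 - 1)) *
      ∫⁻ r in Set.Ioi (0 : ℝ), ENNReal.ofReal (r ^ (n1 - 1)) * (g (r ^ 2 / s ^ 2) * H (r ^ 2 + s ^ 2))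
    = (∫⁻ f in Set.Ioi (0 : ℝ), ENNReal.ofReal
        (f ^ ((n1 : ℝ) / 2 - 1) * (1 + f) ^ (-(((n1 : ℝ) + n2) / 2))) * g f) *
      ∫⁻ w in Set.Ioi (0 : ℝ), ENNReal.ofReal (w ^ (n1 + n2 - 1)) * H (w ^ 2) := by
  have e1 : ∫⁻ s in Set.Ioi (0 : ℝ), ENNReal.ofReal (s ^ (n2 - 1)) *
      ∫⁻ r in Set.Ioi (0 : ℝ), ENNReal.ofReal (r ^ (n1 - 1)) * (g (r ^ 2 / s ^ 2) * H (r ^ 2 + s ^ 2))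
      = ∫⁻ s in Set.Ioi (0 : ℝ), ∫⁻ t in Set.Ioi (0 : ℝ),
        ENNReal.ofReal (t ^ (n1 - 1)) * g (t ^ 2) *
          (ENNReal.ofReal (s ^ (n1 + n2 - 1)) * H (s ^ 2 * (1 + t ^ 2))) := by
    refine setLIntegral_congr_fun measurableSet_Ioi fun s hs => ?_
    have hs : 0 < s := hs
    rw [aux_scale s hs, ← lintegral_const_mul _ (by fun_prop)]
    refine setLIntegral_congr_fun measurableSet_Ioi fun t ht => ?_
    have ht : 0 < t := ht
    have i1 : (s * t) ^ 2 / s ^ 2 = t ^ 2 := by field_simp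
    have i2 : (s * t) ^ 2 + s ^ 2 = s ^ 2 * (1 + t ^ 2) := by ring
    have i3 : s ^ (n1 + n2 - 1) = s ^ (n2 - 1) * s * s ^ (n1 - 1) := by
      rw [← pow_succ, ← pow_add]
      congr 1
      omega
    rw [i1, i2, i3, mul_pow, ENNReal.ofReal_mul (by positivity), ENNReal.ofReal_mul (by positivity),
      ENNReal.ofReal_mul (by positivity)]
    ring
  rw [e1, lintegral_lintegral_swap (by fun_prop)]
  have e2 : ∀ t : ℝ, ∫⁻ w in Set.Ioi (0 : ℝ), ENNReal.ofReal (w ^ (n1 + n2 - 1)) * H (w ^ 2) =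
      ENNReal.ofReal ((1 + t ^ 2) ^ (((n1 : ℝ) + n2) / 2)) *
        ∫⁻ s in Set.Ioi (0 : ℝ), ENNReal.ofReal (s ^ (n1 + n2 - 1)) * H (s ^ 2 * (1 + t ^ 2)) := by
    intro t
    have hp : 0 < 1 + t ^ 2 := by positivity
    rw [aux_scale (√(1 + t ^ 2)) (Real.sqrt_pos.2 hp), ← lintegral_const_mul _ (by fun_prop)]
    refine setLIntegral_congr_fun measurableSet_Ioi fun s hs => ?_
    have hs : 0 < s := hs
    have i1 : (√(1 + t ^ 2) * s) ^ 2 = s ^ 2 * (1 + t ^ 2) := by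
      rw [mul_pow, Real.sq_sqrt hp.le]; ring
    have i2 : (1 + t ^ 2) ^ (((n1 : ℝ) + n2) / 2) = √(1 + t ^ 2) * √(1 + t ^ 2) ^ (n1 + n2 - 1) := by
      rw [← pow_succ', Real.sqrt_eq_rpow, ← Real.rpow_natCast (_ ^ (_ : ℝ)), ← Real.rpow_mul hp.le]
      congr 1
      rw [Nat.sub_add_cancel (by omega)]
      push_cast
      ring
    rw [i1, i2, mul_pow, ENNReal.ofReal_mul (by positivity), ENNReal.ofReal_mul (by positivity)]
    ring
  rw [aux_sq (fun f => ENNReal.ofReal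
    (f ^ ((n1 : ℝ) / 2 - 1) * (1 + f) ^ (-(((n1 : ℝ) + n2) / 2))) * g f), ← lintegral_const_mul _ (by fun_prop), ← lintegral_mul_const _ (by fun_prop)]
  refine setLIntegral_congr_fun measurableSet_Ioi fun t ht => ?_
  have ht : 0 < t := ht
  have hp : 0 < 1 + t ^ 2 := by positivity
  rw [lintegral_const_mul _ (by fun_prop), e2 t]
  have i1 : 2 * t ^ (n1 - 1) = 2 * t * ((t ^ 2) ^ ((n1 : ℝ) / 2 - 1) *
      (1 + t ^ 2) ^ (-(((n1 : ℝ) + n2) / 2))) * (1 + t ^ 2) ^ (((n1 : ℝ) + n2) / 2) := by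
    have j1 : (1 + t ^ 2) ^ (-(((n1 : ℝ) + n2) / 2)) * (1 + t ^ 2) ^ (((n1 : ℝ) + n2) / 2) = 1 := by
      rw [← Real.rpow_add hp]; simp
    have j2 : t * (t ^ 2) ^ ((n1 : ℝ) / 2 - 1) = t ^ (n1 - 1) := by
      have j3 : t * t ^ (((2 : ℕ) : ℝ) * ((n1 : ℝ) / 2 - 1)) =
          t ^ (1 + ((2 : ℕ) : ℝ) * ((n1 : ℝ) / 2 - 1)) := by
        rw [Real.rpow_add ht, Real.rpow_one]
      rw [← Real.rpow_natCast t 2, ← Real.rpow_mul ht.le, j3,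
        ← Real.rpow_natCast t (n1 - 1), Nat.cast_pred hn1]
      congr 1
      push_cast
      ring
    rw [← j2]
    linear_combination (-(2 * t * (t ^ 2) ^ ((n1 : ℝ) / 2 - 1))) * j1
  have i2 : 2 * ENNReal.ofReal (t ^ (n1 - 1)) = ENNReal.ofReal (2 * t) *
      ENNReal.ofReal ((t ^ 2) ^ ((n1 : ℝ) / 2 - 1) *
      (1 + t ^ 2) ^ (-(((n1 : ℝ) + n2) / 2))) * ENNReal.ofReal ((1 + t ^ 2) ^ (((n1 : ℝ) + n2) / 2)) := by
    rw [← ENNReal.ofReal_mul (by positivity), ← ENNReal.ofReal_mul (by positivity), ← i1,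
      ENNReal.ofReal_mul (by positivity)]
    simp
  rw [← mul_assoc, ← mul_assoc, i2]
  ring

theorem aux_norm (n1 n2 : ℕ) (hn1 : 0 < n1) (hn2 : 0 < n2) :
    (∫⁻ f in Set.Ioi (0 : ℝ), ENNReal.ofReal
        (f ^ ((n1 : ℝ) / 2 - 1) * (1 + f) ^ (-(((n1 : ℝ) + n2) / 2)))) =
    ENNReal.ofReal (Gamma ((n1 : ℝ) / 2) * Gamma ((n2 : ℝ) / 2) / Gamma (((n1 : ℝ) + n2) / 2)) := by
  have p1 : 0 < Gamma ((n1 : ℝ) / 2) := Gamma_pos_of_pos (by positivity)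
  have p2 : 0 < Gamma ((n2 : ℝ) / 2) := Gamma_pos_of_pos (by positivity)
  have p3 : 0 < Gamma (((n1 : ℝ) + n2) / 2) := Gamma_pos_of_pos (by positivity)
  have h := aux_core n1 n2 hn1 hn2 (fun _ => 1) (fun x => ENNReal.ofReal (exp (-x)))
    measurable_const (by fun_prop)
  simp only [mul_one, one_mul] at h
  rw [aux_gamma (n1 + n2) (by omega)] at h
  have h2 : ∀ s : ℝ, ∫⁻ r in Set.Ioi (0 : ℝ), ENNReal.ofReal (r ^ (n1 - 1)) *
      ENNReal.ofReal (exp (-(r ^ 2 + s ^ 2))) =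
      ENNReal.ofReal (1 / 2 * Gamma ((n1 : ℝ) / 2)) * ENNReal.ofReal (exp (-s ^ 2)) := by
    intro s
    rw [← aux_gamma n1 hn1, ← lintegral_mul_const _ (by fun_prop)]
    refine lintegral_congr fun r => ?_
    have : exp (-(r ^ 2 + s ^ 2)) = exp (-r ^ 2) * exp (-s ^ 2) := by
      rw [← Real.exp_add]
      congr 1
      ring
    rw [mul_assoc, this, ENNReal.ofReal_mul (by positivity)]
  simp only [h2, mul_left_comm _ (ENNReal.ofReal (1 / 2 * Gamma ((n1 : ℝ) / 2)))] at h
  rw [lintegral_const_mul _ (by fun_prop), aux_gamma n2 hn2] at h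
  push_cast at h
  have hne : ENNReal.ofReal (1 / 2 * Gamma (((n1 : ℝ) + n2) / 2)) ≠ 0 := by
    simp only [ne_eq, ENNReal.ofReal_eq_zero, not_le]; positivity
  refine (ENNReal.mul_left_inj hne ENNReal.ofReal_ne_top).1 (h.symm.trans ?_)
  have h2' : (2 : ENNReal) = ENNReal.ofReal 2 := by simp
  rw [h2', ← ENNReal.ofReal_mul (by positivity), ← ENNReal.ofReal_mul (by positivity),
    ← ENNReal.ofReal_mul (by positivity)]
  congr 1
  field_simp



theorem beta_typeII_distribution_invariant (n1 n2 : ℕ) (hn1 : 0 < n1) (hn2 : 0 < n2)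
    (h : ℝ → ℝ) (hmeas : Measurable h) (hnonneg : ∀ y, 0 ≤ h y)
    (hc : 0 < ∫ w in Set.Ioi (0 : ℝ), h (w ^ 2) * w ^ (n1 + n2 - 1))
    (hcInt : IntegrableOn (fun w => h (w ^ 2) * w ^ (n1 + n2 - 1)) (Set.Ioi 0))
    (C : ℝ) (hC : 0 < C)
    (hprob : IsProbabilityMeasure
      ((volume : Measure (EuclideanSpace ℝ (Fin n1) × EuclideanSpace ℝ (Fin n2))).withDensity
        (fun x => ENNReal.ofReal (C * h (‖x.1‖ ^ 2 + ‖x.2‖ ^ 2))))) :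
    Measure.map (fun x : EuclideanSpace ℝ (Fin n1) × EuclideanSpace ℝ (Fin n2) =>
        ‖x.1‖ ^ 2 / ‖x.2‖ ^ 2)
      ((volume : Measure (EuclideanSpace ℝ (Fin n1) × EuclideanSpace ℝ (Fin n2))).withDensity
        (fun x => ENNReal.ofReal (C * h (‖x.1‖ ^ 2 + ‖x.2‖ ^ 2)))) =
    (volume : Measure ℝ).withDensity (fun f => ENNReal.ofReal
      (Set.indicator (Set.Ioi 0)
        (fun f => Gamma (((n1 : ℝ) + n2) / 2) / (Gamma ((n1 : ℝ) / 2) * Gamma ((n2 : ℝ) / 2)) *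
          (f ^ ((n1 : ℝ) / 2 - 1) * (1 + f) ^ (-(((n1 : ℝ) + n2) / 2)))) f)) := by
  set k : ℝ → ℝ := fun f => f ^ ((n1 : ℝ) / 2 - 1) * (1 + f) ^ (-(((n1 : ℝ) + n2) / 2)) with hk
  have hkm : Measurable k := by fun_prop
  have p1 : 0 < Gamma ((n1 : ℝ) / 2) := Gamma_pos_of_pos (by positivity)
  have p2 : 0 < Gamma ((n2 : ℝ) / 2) := Gamma_pos_of_pos (by positivity)
  have p3 : 0 < Gamma (((n1 : ℝ) + n2) / 2) := Gamma_pos_of_pos (by positivity)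
  obtain ⟨K1, hK1⟩ := aux_radial n1 hn1
  obtain ⟨K2, hK2⟩ := aux_radial n2 hn2
  set H : ℝ → ENNReal := fun y => ENNReal.ofReal (C * h y) with hHdef
  have hH : Measurable H := by fun_prop
  -- the general formula for integrals against the image measure
  obtain ⟨P, hP⟩ : ∃ P : ENNReal, ∀ g : ℝ → ENNReal, Measurable g →
      ∫⁻ x : EuclideanSpace ℝ (Fin n1) × EuclideanSpace ℝ (Fin n2),
        g (‖x.1‖ ^ 2 / ‖x.2‖ ^ 2) * H (‖x.1‖ ^ 2 + ‖x.2‖ ^ 2) =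
      P * ∫⁻ f in Set.Ioi (0 : ℝ), ENNReal.ofReal (k f) * g f := by
    refine ⟨K1 * K2 * 2⁻¹ *
      ∫⁻ w in Set.Ioi (0 : ℝ), ENNReal.ofReal (w ^ (n1 + n2 - 1)) * H (w ^ 2), fun g hg => ?_⟩
    have hcore := aux_core n1 n2 hn1 hn2 g H hg hH
    rw [Measure.volume_eq_prod, lintegral_prod_symm _ (by fun_prop)]
    have s1 : ∀ y : EuclideanSpace ℝ (Fin n2), ∫⁻ x : EuclideanSpace ℝ (Fin n1),
        g (‖x‖ ^ 2 / ‖y‖ ^ 2) * H (‖x‖ ^ 2 + ‖y‖ ^ 2) =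
        K1 * ∫⁻ r in Set.Ioi (0 : ℝ), ENNReal.ofReal (r ^ (n1 - 1)) *
          (g (r ^ 2 / ‖y‖ ^ 2) * H (r ^ 2 + ‖y‖ ^ 2)) := fun y =>
      hK1 (fun r => g (r ^ 2 / ‖y‖ ^ 2) * H (r ^ 2 + ‖y‖ ^ 2)) (by fun_prop)
    have hm : Measurable fun s : ℝ => ∫⁻ r in Set.Ioi (0 : ℝ), ENNReal.ofReal (r ^ (n1 - 1)) *
          (g (r ^ 2 / s ^ 2) * H (r ^ 2 + s ^ 2)) := by
      apply Measurable.lintegral_prod_right'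
        (f := fun p : ℝ × ℝ => ENNReal.ofReal (p.2 ^ (n1 - 1)) *
          (g (p.2 ^ 2 / p.1 ^ 2) * H (p.2 ^ 2 + p.1 ^ 2)))
      fun_prop
    simp only [s1]
    have s2 := hK2 _ hm
    have s3 := lintegral_const_mul (μ := (volume : Measure (EuclideanSpace ℝ (Fin n2)))) K1
      (hm.comp measurable_norm)
    simp only [Function.comp_def] at s3
    rw [s3, s2]
    have h22 : (2⁻¹ : ENNReal) * 2 = 1 := ENNReal.inv_mul_cancel (by simp) (by simp)
    rw [mul_assoc (K1 * K2 * 2⁻¹), mul_comm (∫⁻ w in Set.Ioi (0 : ℝ), _) (∫⁻ f in Set.Ioi (0 : ℝ), _),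
      ← hcore, mul_assoc (K1 * K2), ← mul_assoc 2⁻¹, h22, one_mul, mul_assoc]
  have hPI : P * ENNReal.ofReal
      (Gamma ((n1 : ℝ) / 2) * Gamma ((n2 : ℝ) / 2) / Gamma (((n1 : ℝ) + n2) / 2)) = 1 := by
    have h1 := hP (fun _ => 1) measurable_const
    simp only [one_mul, mul_one] at h1
    rw [← aux_norm n1 n2 hn1 hn2, ← h1, ← hprob.measure_univ, withDensity_apply _ MeasurableSet.univ,
      Measure.restrict_univ]
  have hPv : P = ENNReal.ofReal
      (Gamma (((n1 : ℝ) + n2) / 2) / (Gamma ((n1 : ℝ) / 2) * Gamma ((n2 : ℝ) / 2))) := by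
    rw [ENNReal.eq_inv_of_mul_eq_one_left hPI, ← ENNReal.ofReal_inv_of_pos (by positivity), inv_div]
  refine Measure.ext_of_lintegral _ fun g hg => ?_
  rw [lintegral_map hg (by fun_prop), lintegral_withDensity_eq_lintegral_mul _ (by fun_prop) (by fun_prop),
    lintegral_withDensity_eq_lintegral_mul _ ?_ hg]
  · have h1 := hP g hg
    simp only [Pi.mul_apply]
    simp only [mul_comm (g _)] at h1
    rw [h1, hPv, ← lintegral_const_mul _ (by fun_prop), ← lintegral_indicator measurableSet_Ioi]
    refine lintegral_congr fun f => ?_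
    by_cases hf : f ∈ Set.Ioi (0 : ℝ)
    · simp only [Set.indicator_of_mem hf]
      rw [← mul_assoc, ← ENNReal.ofReal_mul (by positivity)]
    · simp [Set.indicator_of_notMem hf]
  · exact ((hkm.const_mul _).indicator measurableSet_Ioi).ennreal_ofReal
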